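/- arXiv:1008.1652 — 3 statements merged into one kernel-verified Lean document; each statement's English description precedes it below -/
import Mathlib

section
/- Let Σ be an alphabet with at least two symbols and fix b ∈ Σ. For any relatively prime integers n₁, n₂ ≥ 2 there exist regular languages L₁, L₂ over Σ with sc(Lᵢ) = nᵢ and tc_b(Lᵢ) = nᵢ − 1 (i = 1, 2) such that tc_b(L₁ ∪ L₂) = n₁n₂ + n₁ + n₂ − 3. -/
/-- An incomplete DFA over alphabet `α` with state type `σ`:
the transition function is a partial function, modelled as `Option`-valued. -/
structure IDFA (α : Type) (σ : Type) where
  /-- The (partial) transition function. -/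
  step : σ → α → Option σ
  /-- The start state. -/
  start : σ
  /-- The set of accepting states. -/
  accept : Set σ

namespace IDFA

variable {α σ : Type}

/-- The extended (partial) transition function on words. -/
def evalFrom (A : IDFA α σ) (q : σ) (w : List α) : Option σ :=
  w.foldl (fun oq a => oq.bind fun p => A.step p a) (some q)

/-- Running the automaton from the start state. -/
def eval (A : IDFA α σ) (w : List α) : Option σ :=
  A.evalFrom A.start w

/-- The language recognized by an incomplete DFA: words on which the run is
defined and ends in an accepting state. -/
def accepts (A : IDFA α σ) : Set (List α) :=
  {w | ∃ q ∈ A.accept, A.eval w = some q}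

/-- `#tr(A)`: the number of (defined) transitions of `A`. -/
noncomputable def trCount (A : IDFA α σ) : ℕ :=
  {p : σ × α | (A.step p.1 p.2).isSome}.ncard

/-- `#tr(A, b)`: the number of `b`-transitions of `A`. -/
noncomputable def trCountOn (A : IDFA α σ) (b : α) : ℕ :=
  {q : σ | (A.step q b).isSome}.ncard

/-- An incomplete DFA is connected if every state is reachable from the start state. -/
def Connected (A : IDFA α σ) : Prop :=
  ∀ q : σ, ∃ w : List α, A.evalFrom A.start w = some q

end IDFA

/-- A language is regular iff it is recognized by some incomplete DFA with
finitely many states. -/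
def IsRegularLang {α : Type} (L : Set (List α)) : Prop :=
  ∃ (σ : Type) (_ : Finite σ) (A : IDFA α σ), A.accepts = L

/-- `tc(L)`: the transition complexity of `L`, i.e. the minimal number of
transitions of any incomplete DFA recognizing `L`. -/
noncomputable def tc {α : Type} (L : Set (List α)) : ℕ :=
  sInf {n | ∃ (σ : Type) (_ : Finite σ) (A : IDFA α σ), A.accepts = L ∧ A.trCount = n}

/-- `tc_b(L)`: the `b`-transition complexity of `L`, i.e. the minimal number of
`b`-transitions of any incomplete DFA recognizing `L`. -/
noncomputable def tcOn {α : Type} (L : Set (List α)) (b : α) : ℕ :=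
  sInf {n | ∃ (σ : Type) (_ : Finite σ) (A : IDFA α σ), A.accepts = L ∧ A.trCountOn b = n}

/-- `sc(L)`: the (incomplete-DFA) state complexity of `L`, i.e. the number of
states of a minimal incomplete DFA recognizing `L`. -/
noncomputable def sc {α : Type} (L : Set (List α)) : ℕ :=
  sInf {n | ∃ (σ : Type) (_ : Finite σ) (A : IDFA α σ), A.accepts = L ∧ Nat.card σ = n}

/-!
The lower bounds are Myhill–Nerode arguments: if two automata recognize the same language, then
after any word the right languages of their current states agree. Hence reachable states of one
automaton with distinct nonempty right languages correspond to distinct states of the other, and a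
`b`-transition from which acceptance is possible corresponds to a `b`-transition.

The witnesses are the automata on `ZMod n`, accepting at `0`, in which `b` is undefined at `0` and
loops elsewhere, and every other letter adds one. In the product for the union each component may
have died; a component dies under `b` exactly at `0`. So `b` is undefined exactly on the four
states of `{none, 0} × {none, 0}`, leaving `(n₁ + 1) (n₂ + 1) - 4 = n₁ n₂ + n₁ + n₂ - 3`
transitions. By the Chinese remainder theorem, for a letter `a ≠ b` the words `a ^ k` and `a ^ k b`
reach all their sources, and the words `a ^ k` separate them.
-/

theorem exists_natCast_zmod_eq_and_eq {n m : ℕ} [NeZero n] [NeZero m]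
    (hnm : n.Coprime m) (x : ZMod n) (y : ZMod m) :
    ∃ k : ℕ, (k : ZMod n) = x ∧ (k : ZMod m) = y := by
  obtain ⟨k, hk⟩ := ZMod.natCast_zmod_surjective ((ZMod.chineseRemainder hnm).symm (x, y))
  have hpair : ((k : ZMod n), (k : ZMod m)) = (x, y) := by
    rw [← (ZMod.chineseRemainder hnm).apply_symm_apply (x, y), ← hk, map_natCast]
    rfl
  exact ⟨k, Prod.ext_iff.1 hpair⟩

namespace IDFA

variable {α σ τ : Type}

/-- The extended transition function on possibly undefined states, `none` being the state of a run
that has died; `A.evalFrom q` is `A.run (some q)` by definition. -/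
def run (A : IDFA α σ) (o : Option σ) (w : List α) : Option σ :=
  w.foldl (fun oq a => oq.bind fun p => A.step p a) o

/-- The right language of a possibly undefined state: the words leading from it to acceptance. -/
def acceptsFrom (A : IDFA α σ) (o : Option σ) : Set (List α) :=
  {w | ∃ s ∈ A.accept, A.run o w = some s}

theorem run_cons (A : IDFA α σ) (o : Option σ) (x : α) (w : List α) :
    A.run o (x :: w) = A.run (o.bind (A.step · x)) w :=
  rfl

theorem run_append (A : IDFA α σ) (o : Option σ) (u v : List α) :
    A.run o (u ++ v) = A.run (A.run o u) v :=
  List.foldl_append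

theorem eval_append (A : IDFA α σ) (u v : List α) : A.eval (u ++ v) = A.run (A.eval u) v :=
  A.run_append (some A.start) u v

theorem run_none (A : IDFA α σ) (w : List α) : A.run none w = none := by
  induction w with
  | nil => rfl
  | cons _ _ ih => exact ih

theorem acceptsFrom_none (A : IDFA α σ) : A.acceptsFrom none = ∅ := by
  simp [acceptsFrom, run_none]

theorem isSome_of_acceptsFrom_nonempty {A : IDFA α σ} {o : Option σ}
    (h : (A.acceptsFrom o).Nonempty) : o.isSome := by
  cases o with
  | none => simp [acceptsFrom_none] at h
  | some q => rfl

theorem append_mem_acceptsFrom (A : IDFA α σ) (o : Option σ) (u v : List α) :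
    u ++ v ∈ A.acceptsFrom o ↔ v ∈ A.acceptsFrom (A.run o u) := by
  simp only [acceptsFrom, Set.mem_ofPred_eq, run_append]

theorem acceptsFrom_run_congr {A : IDFA α σ} {B : IDFA α τ} {o : Option σ} {p : Option τ}
    (h : A.acceptsFrom o = B.acceptsFrom p) (w : List α) :
    A.acceptsFrom (A.run o w) = B.acceptsFrom (B.run p w) := by
  ext v
  rw [← append_mem_acceptsFrom, ← append_mem_acceptsFrom, h]

theorem exists_acceptsFrom_eq_of_accepts_eq {A : IDFA α σ} {B : IDFA α τ}
    (h : A.accepts = B.accepts) {q : σ} (hreach : ∃ w, A.eval w = some q)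
    (hlive : (A.acceptsFrom (some q)).Nonempty) :
    ∃ t, B.acceptsFrom (some t) = A.acceptsFrom (some q) := by
  obtain ⟨w, hw⟩ := hreach
  have heq : A.acceptsFrom (some q) = B.acceptsFrom (B.eval w) :=
    hw ▸ acceptsFrom_run_congr h w
  obtain ⟨t, ht⟩ := Option.isSome_iff_exists.1 (isSome_of_acceptsFrom_nonempty (heq ▸ hlive))
  exact ⟨t, ht ▸ heq.symm⟩

theorem ncard_le_ncard_of_accepts_eq [Finite τ] {A : IDFA α σ} {B : IDFA α τ}
    (h : A.accepts = B.accepts) {S : Set σ} {T : Set τ}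
    (hreach : ∀ q ∈ S, ∃ w, A.eval w = some q)
    (hlive : ∀ q ∈ S, (A.acceptsFrom (some q)).Nonempty)
    (hinj : S.InjOn fun q => A.acceptsFrom (some q))
    (hT : ∀ q ∈ S, ∀ t, B.acceptsFrom (some t) = A.acceptsFrom (some q) → t ∈ T) :
    S.ncard ≤ T.ncard := by
  have hex : ∀ q : S, ∃ t, B.acceptsFrom (some t) = A.acceptsFrom (some q.1) := fun q =>
    exists_acceptsFrom_eq_of_accepts_eq h (hreach q q.2) (hlive q q.2)
  choose f hf using hex
  rw [← Nat.card_coe_set_eq, ← Nat.card_coe_set_eq]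
  refine Nat.card_le_card_of_injective (fun q => ⟨f q, hT q q.2 _ (hf q)⟩) fun q r hqr => ?_
  have hfqr : f q = f r := congrArg Subtype.val hqr
  exact Subtype.ext (hinj q.2 r.2 (by simp only [← hf, hfqr]))

theorem sc_accepts_eq_card [Finite σ] (A : IDFA α σ) (hconn : A.Connected)
    (hlive : ∀ q, (A.acceptsFrom (some q)).Nonempty)
    (hinj : Function.Injective fun q => A.acceptsFrom (some q)) :
    sc A.accepts = Nat.card σ := by
  refine IsLeast.csInf_eq (s := {_n | _}) ⟨⟨σ, ‹_›, A, rfl, rfl⟩, ?_⟩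
  rintro _ ⟨τ, _, B, hB, rfl⟩
  rw [← Set.ncard_univ, ← Set.ncard_univ]
  exact ncard_le_ncard_of_accepts_eq hB.symm (fun q _ => hconn q) (fun q _ => hlive q)
    hinj.injOn fun _ _ _ _ => Set.mem_univ _

theorem tcOn_accepts_eq_trCountOn [Finite σ] (A : IDFA α σ) (b : α)
    (hreach : ∀ q, (A.step q b).isSome → ∃ w, A.eval w = some q)
    (hlive : ∀ q, (A.step q b).isSome → (A.acceptsFrom (A.step q b)).Nonempty)
    (hinj : {q | (A.step q b).isSome}.InjOn fun q => A.acceptsFrom (some q)) :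
    tcOn A.accepts b = A.trCountOn b := by
  refine IsLeast.csInf_eq (s := {_n | _}) ⟨⟨σ, ‹_›, A, rfl, rfl⟩, ?_⟩
  rintro _ ⟨τ, _, B, hB, rfl⟩
  refine ncard_le_ncard_of_accepts_eq hB.symm hreach (fun q hq => ?_) hinj fun q hq t ht => ?_
  · obtain ⟨v, hv⟩ := hlive q hq
    exact ⟨b :: v, hv⟩
  · have hstep : B.acceptsFrom (B.step t b) = A.acceptsFrom (A.step q b) :=
      acceptsFrom_run_congr ht [b]
    exact isSome_of_acceptsFrom_nonempty (hstep ▸ hlive q hq)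

section Union

/-- The joint state of two runs, undefined when both runs have died. -/
def jointState (p : Option σ) (r : Option τ) : Option (Option σ × Option τ) :=
  Option.guard (fun s => s.1.isSome || s.2.isSome) (p, r)

/-- The product automaton for the union of two languages, which tracks a run of each automaton and
survives as long as one of the two runs does. The state `(none, none)` is unreachable; it is kept so
that the state space is a full product. -/
def union (A : IDFA α σ) (B : IDFA α τ) : IDFA α (Option σ × Option τ) where
  step q x := jointState (q.1.bind (A.step · x)) (q.2.bind (B.step · x))
  start := (some A.start, some B.start)
  accept := {q | (∃ s ∈ A.accept, q.1 = some s) ∨ ∃ t ∈ B.accept, q.2 = some t}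

theorem isSome_jointState {p : Option σ} {r : Option τ} :
    (jointState p r).isSome ↔ p.isSome ∨ r.isSome := by
  simp [jointState]

variable (A : IDFA α σ) (B : IDFA α τ)

theorem jointState_bind_step_union (p : Option σ) (r : Option τ) (x : α) :
    (jointState p r).bind ((A.union B).step · x) =
      jointState (p.bind (A.step · x)) (r.bind (B.step · x)) := by
  cases p <;> cases r <;> rfl

theorem run_union_jointState (p : Option σ) (r : Option τ) (w : List α) :
    (A.union B).run (jointState p r) w = jointState (A.run p w) (B.run r w) := by
  induction w generalizing p r with
  | nil => rfl
  | cons x w ih => rw [run_cons, jointState_bind_step_union, ih, run_cons, run_cons]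

theorem eval_union (w : List α) : (A.union B).eval w = jointState (A.eval w) (B.eval w) :=
  run_union_jointState A B (some A.start) (some B.start) w

theorem acceptsFrom_union_jointState (p : Option σ) (r : Option τ) :
    (A.union B).acceptsFrom (jointState p r) = A.acceptsFrom p ∪ B.acceptsFrom r := by
  ext w
  simp only [acceptsFrom, run_union_jointState, Set.mem_union, Set.mem_ofPred_eq]
  generalize A.run p w = p', B.run r w = r'
  cases p' <;> cases r' <;> simp [jointState, union]

theorem accepts_union : (A.union B).accepts = A.accepts ∪ B.accepts :=
  acceptsFrom_union_jointState A B (some A.start) (some B.start)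

theorem jointState_eq_some_of_isSome_step_union {A : IDFA α σ} {B : IDFA α τ}
    {q : Option σ × Option τ} {x : α} (h : ((A.union B).step q x).isSome) :
    jointState q.1 q.2 = some q := by
  obtain ⟨_ | p, _ | r⟩ := q
  · cases h
  all_goals rfl

end Union

section Cyclic

open Classical in
/-- The cyclic automaton on `ZMod n` whose language attains the bounds: it accepts at `0`, every
letter other than `b` adds one, and `b` is undefined at `0` and loops elsewhere. -/
noncomputable def cyclic (b : α) (n : ℕ) : IDFA α (ZMod n) where
  step q x := if x = b then (if q = 0 then none else some q) else some (q + 1)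
  start := 0
  accept := {0}

variable {a b : α} {n : ℕ}

theorem isSome_bind_step_cyclic_self {o : Option (ZMod n)} :
    (o.bind ((cyclic b n).step · b)).isSome ↔ o ∉ ({none, some 0} : Set _) := by
  cases o <;> simp [cyclic]

theorem isSome_step_cyclic_self {q : ZMod n} : ((cyclic b n).step q b).isSome ↔ q ≠ 0 := by
  simp [cyclic]

theorem run_cyclic_replicate (hab : a ≠ b) (o : Option (ZMod n)) (k : ℕ) :
    (cyclic b n).run o (List.replicate k a) = o.map (· + (k : ZMod n)) := by
  induction k generalizing o with
  | zero => simp [run]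
  | succ k ih =>
    rw [List.replicate_succ, run_cons, ih]
    cases o <;> simp [cyclic, hab, add_assoc, add_comm (1 : ZMod n)]

theorem replicate_mem_acceptsFrom_cyclic (hab : a ≠ b) {o : Option (ZMod n)} {k : ℕ} :
    List.replicate k a ∈ (cyclic b n).acceptsFrom o ↔ o = some (-k : ZMod n) := by
  rw [acceptsFrom, Set.mem_ofPred_eq, run_cyclic_replicate hab]
  cases o <;> simp [cyclic, eq_neg_iff_add_eq_zero]

theorem connected_cyclic [NeZero n] (hab : a ≠ b) : (cyclic b n).Connected := fun q => by
  obtain ⟨k, hk⟩ := ZMod.natCast_zmod_surjective q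
  refine ⟨List.replicate k a, (run_cyclic_replicate hab (some 0) k).trans ?_⟩
  simp [hk]

theorem acceptsFrom_cyclic_nonempty [NeZero n] (hab : a ≠ b) {o : Option (ZMod n)}
    (ho : o.isSome) : ((cyclic b n).acceptsFrom o).Nonempty := by
  obtain ⟨q, rfl⟩ := Option.isSome_iff_exists.1 ho
  obtain ⟨k, hk⟩ := ZMod.natCast_zmod_surjective (-q)
  exact ⟨List.replicate k a, (replicate_mem_acceptsFrom_cyclic hab).2 (by simp [hk])⟩

theorem acceptsFrom_cyclic_injective [NeZero n] (hab : a ≠ b) :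
    Function.Injective fun q => (cyclic b n).acceptsFrom (some q) := fun q r hqr => by
  obtain ⟨k, hk⟩ := ZMod.natCast_zmod_surjective (-q)
  have hmem : List.replicate k a ∈ (cyclic b n).acceptsFrom (some q) :=
    (replicate_mem_acceptsFrom_cyclic hab).2 (by simp [hk])
  have hr : some r = some (-k : ZMod n) :=
    (replicate_mem_acceptsFrom_cyclic hab).1 (hqr.subset hmem)
  rw [hk, neg_neg, Option.some_inj] at hr
  exact hr.symm

theorem sc_cyclic [NeZero n] (hab : a ≠ b) : sc (cyclic b n).accepts = n := by
  rw [sc_accepts_eq_card _ (connected_cyclic hab)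
    (fun _ => acceptsFrom_cyclic_nonempty hab rfl) (acceptsFrom_cyclic_injective hab),
    Nat.card_zmod]

theorem trCountOn_cyclic [NeZero n] (b : α) : (cyclic b n).trCountOn b = n - 1 := by
  have hset : {q : ZMod n | ((cyclic b n).step q b).isSome} = {0}ᶜ :=
    Set.ext fun _ => isSome_step_cyclic_self
  rw [trCountOn, hset, Set.ncard_compl, Set.ncard_singleton, Nat.card_zmod]

theorem tcOn_cyclic [NeZero n] (hab : a ≠ b) : tcOn (cyclic b n).accepts b = n - 1 := by
  rw [tcOn_accepts_eq_trCountOn _ _ (fun q _ => connected_cyclic hab q)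
    (fun _ => acceptsFrom_cyclic_nonempty hab) (acceptsFrom_cyclic_injective hab).injOn,
    trCountOn_cyclic]

end Cyclic

section UnionCyclic

variable {a b : α} {n m : ℕ}

theorem isSome_step_union_cyclic_self {q : Option (ZMod n) × Option (ZMod m)} :
    (((cyclic b n).union (cyclic b m)).step q b).isSome ↔
      q ∈ (({none, some 0} : Set (Option (ZMod n))) ×ˢ
        ({none, some 0} : Set (Option (ZMod m))))ᶜ := by
  rw [union, isSome_jointState, isSome_bind_step_cyclic_self, isSome_bind_step_cyclic_self,
    Set.mem_compl_iff, Set.mem_prod, not_and_or]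

variable [NeZero n] [NeZero m]

theorem exists_eval_cyclic_eq_some_some (hab : a ≠ b) (hnm : n.Coprime m) (x : ZMod n)
    (y : ZMod m) : ∃ w, (cyclic b n).eval w = some x ∧ (cyclic b m).eval w = some y := by
  obtain ⟨k, rfl, rfl⟩ := exists_natCast_zmod_eq_and_eq hnm x y
  refine ⟨List.replicate k a, (run_cyclic_replicate hab (some 0) k).trans ?_,
    (run_cyclic_replicate hab (some 0) k).trans ?_⟩ <;> simp

theorem exists_eval_cyclic_eq_none_some (hab : a ≠ b) (hnm : n.Coprime m) {y : ZMod m}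
    (hy : y ≠ 0) : ∃ w, (cyclic b n).eval w = none ∧ (cyclic b m).eval w = some y := by
  obtain ⟨w, hn, hm⟩ := exists_eval_cyclic_eq_some_some hab hnm 0 y
  refine ⟨w ++ [b], ?_, ?_⟩
  · rw [eval_append, hn]
    simp [run, cyclic]
  · rw [eval_append, hm]
    simp [run, cyclic, hy]

theorem exists_eval_union_cyclic_eq_some (hab : a ≠ b) (hnm : n.Coprime m)
    {q : Option (ZMod n) × Option (ZMod m)}
    (hq : (((cyclic b n).union (cyclic b m)).step q b).isSome) :
    ∃ w, ((cyclic b n).union (cyclic b m)).eval w = some q := by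
  suffices hw : ∃ w, (cyclic b n).eval w = q.1 ∧ (cyclic b m).eval w = q.2 by
    obtain ⟨w, hn, hm⟩ := hw
    exact ⟨w, by rw [eval_union, hn, hm, jointState_eq_some_of_isSome_step_union hq]⟩
  rw [isSome_step_union_cyclic_self] at hq
  obtain ⟨_ | x, _ | y⟩ := q
  · simp at hq
  · exact exists_eval_cyclic_eq_none_some hab hnm (by simpa using hq)
  · obtain ⟨w, hm, hn⟩ := exists_eval_cyclic_eq_none_some hab hnm.symm (by simpa using hq)
    exact ⟨w, hn, hm⟩
  · exact exists_eval_cyclic_eq_some_some hab hnm x y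

theorem eq_some_iff_forall_replicate_mem_union [Nontrivial (ZMod m)] (hab : a ≠ b)
    (hnm : n.Coprime m) {p : Option (ZMod n)} (r : Option (ZMod m)) {x : ZMod n} :
    p = some x ↔ ∀ k : ℕ, (-k : ZMod n) = x →
      List.replicate k a ∈ (cyclic b n).acceptsFrom p ∪ (cyclic b m).acceptsFrom r := by
  simp only [Set.mem_union, replicate_mem_acceptsFrom_cyclic hab]
  refine ⟨fun hp k hk => .inl (hk ▸ hp), fun h => ?_⟩
  obtain ⟨y, hy⟩ : ∃ y, r ≠ some y := by
    obtain ⟨y, y', hne⟩ := exists_pair_ne (ZMod m)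
    by_contra! hr
    exact hne (Option.some_inj.1 ((hr y).symm.trans (hr y')))
  obtain ⟨k, hkx, hky⟩ := exists_natCast_zmod_eq_and_eq hnm (-x) (-y)
  have hk := h k (by rw [hkx, neg_neg])
  rw [hkx, hky, neg_neg, neg_neg] at hk
  exact hk.resolve_right hy

theorem eq_of_acceptsFrom_cyclic_union_eq [Nontrivial (ZMod m)] (hab : a ≠ b)
    (hnm : n.Coprime m) {p p' : Option (ZMod n)} {r r' : Option (ZMod m)}
    (h : (cyclic b n).acceptsFrom p ∪ (cyclic b m).acceptsFrom r =
      (cyclic b n).acceptsFrom p' ∪ (cyclic b m).acceptsFrom r') : p = p' :=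
  Option.ext fun x => by
    rw [eq_some_iff_forall_replicate_mem_union hab hnm r, h,
      ← eq_some_iff_forall_replicate_mem_union hab hnm r']

theorem injOn_acceptsFrom_union_cyclic [Nontrivial (ZMod n)] [Nontrivial (ZMod m)] (hab : a ≠ b)
    (hnm : n.Coprime m) :
    {q | (((cyclic b n).union (cyclic b m)).step q b).isSome}.InjOn
      fun q => ((cyclic b n).union (cyclic b m)).acceptsFrom (some q) := by
  intro q hq q' hq' h
  simp only [← jointState_eq_some_of_isSome_step_union hq,
    ← jointState_eq_some_of_isSome_step_union hq', acceptsFrom_union_jointState] at h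
  refine Prod.ext (eq_of_acceptsFrom_cyclic_union_eq hab hnm h)
    (eq_of_acceptsFrom_cyclic_union_eq hab hnm.symm (r := q.1) (r' := q'.1) ?_)
  rwa [Set.union_comm, Set.union_comm (acceptsFrom _ q'.2)]

theorem acceptsFrom_union_cyclic_nonempty (hab : a ≠ b) {p : Option (ZMod n)}
    {r : Option (ZMod m)} (h : (jointState p r).isSome) :
    (((cyclic b n).union (cyclic b m)).acceptsFrom (jointState p r)).Nonempty := by
  rw [acceptsFrom_union_jointState]
  exact (isSome_jointState.1 h).elim (fun hp => (acceptsFrom_cyclic_nonempty hab hp).inl)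
    fun hr => (acceptsFrom_cyclic_nonempty hab hr).inr

theorem trCountOn_union_cyclic (b : α) :
    ((cyclic b n).union (cyclic b m)).trCountOn b = n * m + n + m - 3 := by
  have hset : {q | (((cyclic b n).union (cyclic b m)).step q b).isSome} =
      (({none, some 0} : Set (Option (ZMod n))) ×ˢ ({none, some 0} : Set (Option (ZMod m))))ᶜ :=
    Set.ext fun _ => isSome_step_union_cyclic_self
  calc ((cyclic b n).union (cyclic b m)).trCountOn b
      = (n + 1) * (m + 1) - 2 * 2 := by
        rw [trCountOn, hset, Set.ncard_compl, Set.ncard_prod, Set.ncard_pair (by simp),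
          Set.ncard_pair (by simp), Nat.card_prod, Finite.card_option, Finite.card_option,
          Nat.card_zmod, Nat.card_zmod]
    _ = n * m + n + m - 3 := by
        rw [show (n + 1) * (m + 1) = n * m + n + m + 1 by ring]
        omega

theorem tcOn_union_cyclic [Nontrivial (ZMod n)] [Nontrivial (ZMod m)] (hab : a ≠ b)
    (hnm : n.Coprime m) :
    tcOn ((cyclic b n).accepts ∪ (cyclic b m).accepts) b = n * m + n + m - 3 := by
  rw [← accepts_union, tcOn_accepts_eq_trCountOn _ _
    (fun _ => exists_eval_union_cyclic_eq_some hab hnm)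
    (fun _ => acceptsFrom_union_cyclic_nonempty hab)
    (injOn_acceptsFrom_union_cyclic hab hnm), trCountOn_union_cyclic]

end UnionCyclic

end IDFA

theorem tcOn_union_max_lower_bound_general {α : Type} [Nontrivial α] (b : α)
    (n₁ n₂ : ℕ) (hn₁ : 2 ≤ n₁) (hn₂ : 2 ≤ n₂) (hcop : Nat.Coprime n₁ n₂) :
    ∃ L₁ L₂ : Set (List α), IsRegularLang L₁ ∧ IsRegularLang L₂ ∧
      sc L₁ = n₁ ∧ sc L₂ = n₂ ∧ tcOn L₁ b = n₁ - 1 ∧ tcOn L₂ b = n₂ - 1 ∧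
      tcOn (L₁ ∪ L₂) b = n₁ * n₂ + n₁ + n₂ - 3 := by
  obtain ⟨a, hab⟩ := exists_ne b
  have : NeZero n₁ := ⟨by omega⟩
  have : NeZero n₂ := ⟨by omega⟩
  have : Fact (1 < n₁) := ⟨hn₁⟩
  have : Fact (1 < n₂) := ⟨hn₂⟩
  exact ⟨(IDFA.cyclic b n₁).accepts, (IDFA.cyclic b n₂).accepts,
    ⟨_, inferInstance, _, rfl⟩, ⟨_, inferInstance, _, rfl⟩,
    IDFA.sc_cyclic hab, IDFA.sc_cyclic hab, IDFA.tcOn_cyclic hab, IDFA.tcOn_cyclic hab,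
    IDFA.tcOn_union_cyclic hab hcop⟩

/-- for relatively prime `n₁, n₂ ≥ 2` there are languages with
`sc(Lᵢ) = nᵢ`, `tc_b(Lᵢ) = nᵢ - 1` and `tc_b(L₁ ∪ L₂) = n₁n₂ + n₁ + n₂ - 3`. -/
theorem tcOn_union_max_lower_bound {α : Type} [Finite α] (hcard : 2 ≤ Nat.card α) (b : α)
    (n₁ n₂ : ℕ) (hn₁ : 2 ≤ n₁) (hn₂ : 2 ≤ n₂) (hcop : Nat.Coprime n₁ n₂) :
    ∃ L₁ L₂ : Set (List α), IsRegularLang L₁ ∧ IsRegularLang L₂ ∧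
      sc L₁ = n₁ ∧ sc L₂ = n₂ ∧ tcOn L₁ b = n₁ - 1 ∧ tcOn L₂ b = n₂ - 1 ∧
      tcOn (L₁ ∪ L₂) b = n₁ * n₂ + n₁ + n₂ - 3 := by
  have : Nontrivial α := Finite.one_lt_card_iff_nontrivial.1 hcard
  exact tcOn_union_max_lower_bound_general b n₁ n₂ hn₁ hn₂ hcop
end

section
/- Let Σ be an alphabet with at least two symbols and fix c ∈ Σ. Let n₁ and n₂ be relatively prime integers with n₁, n₂ ≥ 2, and for each b ∈ Σ \ {c} fix integers k_{1,b}, k_{2,b} with 1 ≤ k_{i,b} < nᵢ (i = 1, 2). Then there exist regular languages L₁, L₂ over Σ such that sc(Lᵢ) = nᵢ and tc_b(Lᵢ) = k_{i,b} for all b ∈ Σ \ {c} (i = 1, 2), and for every b ∈ Σ \ {c}, tc_b(L₁ ∪ L₂) = k_{1,b}·k_{2,b} + k_{1,b}·(1 + n₂ − k_{2,b}) + k_{2,b}·(1 + n₁ − k_{1,b}). -/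
/-!
Completing an incomplete DFA with a sink identifies incomplete DFAs with complete DFAs that have a
distinguished sink. If such a complete DFA is minimal (Myhill–Nerode), its non-sink states and its
transitions avoiding the sink embed into every incomplete DFA for the same language, so they
compute `sc` and every `tcOn` at once.

As witnesses take the cycles `ℤ/nᵢ` on which `c` acts as `+1` and every other letter `b` as the
identity restricted to `{0, …, kᵢ b - 1}`. By the Chinese remainder theorem, powers of `c` move the
two coordinates of the product automaton independently, which makes it minimal for the union.
Writing `Dᵢ` for the states of the `i`-th completed cycle where `b` is defined, a `b`-transition of
the product avoids the sink exactly on `D₁ × D₂ ∪ D₁ × D₂ᶜ ∪ D₁ᶜ × D₂`; these three blocks are the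
three summands.
-/

theorem ncard_setOf_fst_mem_or_snd_mem {X Y : Type*} [Finite X] [Finite Y] (S : Set X)
    (T : Set Y) :
    {p : X × Y | p.1 ∈ S ∨ p.2 ∈ T}.ncard =
      S.ncard * T.ncard + S.ncard * (Nat.card Y - T.ncard) + T.ncard * (Nat.card X - S.ncard) := by
  have blocks : {p : X × Y | p.1 ∈ S ∨ p.2 ∈ T} = S ×ˢ T ∪ S ×ˢ Tᶜ ∪ Sᶜ ×ˢ T := by
    ext p
    simp only [Set.mem_ofPred_eq, Set.mem_union, Set.mem_prod, Set.mem_compl_iff]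
    tauto
  have disjoint_left : Disjoint (S ×ˢ T) (S ×ˢ Tᶜ) :=
    Set.disjoint_prod.2 (.inr disjoint_compl_right)
  have disjoint_right : Disjoint (S ×ˢ T ∪ S ×ˢ Tᶜ) (Sᶜ ×ˢ T) := by
    rw [← Set.prod_union]
    exact Set.disjoint_prod.2 (.inl disjoint_compl_right)
  rw [blocks, Set.ncard_union_eq disjoint_right, Set.ncard_union_eq disjoint_left, Set.ncard_prod,
    Set.ncard_prod, Set.ncard_prod, Set.ncard_compl, Set.ncard_compl, mul_comm (_ - _)]

theorem option_eq_of_forall_or_iff {X Y : Type*} [Nontrivial Y] {x x' : Option X} {y y' : Option Y}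
    (h : ∀ i j, (x = some i ∨ y = some j) ↔ (x' = some i ∨ y' = some j)) : x = x' := by
  have exists_ne_some (z : Option Y) : ∃ j, z ≠ some j := by
    cases z with
    | none => exact ⟨Classical.arbitrary Y, nofun⟩
    | some j => exact (exists_ne j).imp fun _ hj => mt Option.some.inj hj.symm
  refine Option.ext fun i => ⟨fun hx => ?_, fun hx' => ?_⟩
  · obtain ⟨j, hj⟩ := exists_ne_some y'
    exact ((h i j).1 (.inl hx)).resolve_right hj
  · obtain ⟨j, hj⟩ := exists_ne_some y
    exact ((h i j).2 (.inl hx')).resolve_right hj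

theorem exists_natCast_zmod_eq_and_eq_s7 {m n : ℕ} [NeZero m] [NeZero n] (h : Nat.Coprime m n)
    (i : ZMod m) (j : ZMod n) : ∃ t : ℕ, (t : ZMod m) = i ∧ (t : ZMod n) = j := by
  obtain ⟨t, ht⟩ := ZMod.natCast_zmod_surjective ((ZMod.chineseRemainder h).symm (i, j))
  have ht' := congrArg (ZMod.chineseRemainder h) ht
  simp only [map_natCast, RingEquiv.apply_symm_apply, Prod.ext_iff] at ht'
  exact ⟨t, ht'⟩

theorem ncard_setOf_zmod_val_lt {n k : ℕ} [NeZero n] (hk : k ≤ n) :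
    {i : ZMod n | i.val < k}.ncard = k := by
  have Iio_subset : Set.Iio k ⊆ Set.range (ZMod.val (n := n)) := fun m hm =>
    ⟨m, ZMod.val_natCast_of_lt (lt_of_lt_of_le hm hk)⟩
  calc (ZMod.val ⁻¹' Set.Iio k : Set (ZMod n)).ncard
      = (Set.Iio k).ncard :=
        Set.ncard_preimage_of_injective_subset_range (ZMod.val_injective n) Iio_subset
    _ = k := by rw [Set.ncard_eq_toFinset_card', Set.toFinset_Iio, Nat.card_Iio]

theorem acceptsFrom_eq_zero_of_step_eq_self {α ρ : Type*} {M : DFA α ρ} {s : ρ}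
    (hstep : ∀ a, M.step s a = s) (hs : s ∉ M.accept) : M.acceptsFrom s = 0 := by
  ext w
  rw [DFA.mem_acceptsFrom, DFA.evalFrom, List.foldl_fixed' hstep]
  exact iff_of_false hs (Language.notMem_zero w)

namespace IDFA

variable {α σ ρ : Type}

/-- The completion of an incomplete DFA: the complete DFA in which `none` is a new sink that
receives every undefined transition. -/
def completion (A : IDFA α σ) : DFA α (Option σ) where
  step x a := x.bind fun q => A.step q a
  start := some A.start
  accept := {x | ∃ q ∈ A.accept, x = some q}

theorem accepts_completion (A : IDFA α σ) : A.completion.accepts = A.accepts := rfl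

theorem acceptsFrom_completion_none (A : IDFA α σ) : A.completion.acceptsFrom none = 0 :=
  acceptsFrom_eq_zero_of_step_eq_self (fun _ => rfl) (by simp [completion])

open Classical in
/-- The incomplete DFA obtained from a complete DFA by deleting the state `s` together with all
transitions into it. It is meant for a non-accepting sink `s`, where it inverts `completion`. -/
noncomputable def removeSink (M : DFA α ρ) (s : ρ) (hs : M.start ≠ s) : IDFA α {q // q ≠ s} where
  step q a := (Equiv.optionSubtypeNe s).symm (M.step q a)
  start := ⟨M.start, hs⟩
  accept := {q | ↑q ∈ M.accept}

theorem step_removeSink_isSome_iff {M : DFA α ρ} {s : ρ} {hs : M.start ≠ s} {q : {q // q ≠ s}}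
    {a : α} : ((removeSink M s hs).step q a).isSome ↔ M.step q a ≠ s := by
  classical
  simp [removeSink, Option.isSome_iff_ne_none]

open Classical in
theorem completion_removeSink {M : DFA α ρ} {s : ρ} (hs : M.start ≠ s)
    (hstep : ∀ a, M.step s a = s) (haccept : s ∉ M.accept) :
    (removeSink M s hs).completion = DFA.reindex (Equiv.optionSubtypeNe s).symm M := by
  have step_eq : (removeSink M s hs).completion.step =
      (DFA.reindex (Equiv.optionSubtypeNe s).symm M).step := by
    funext x a
    cases x with
    | none => simp [completion, hstep]
    | some q => rfl
  have start_eq : (removeSink M s hs).completion.start =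
      (DFA.reindex (Equiv.optionSubtypeNe s).symm M).start :=
    (Equiv.optionSubtypeNe_symm_of_ne hs).symm
  have accept_eq : (removeSink M s hs).completion.accept =
      (DFA.reindex (Equiv.optionSubtypeNe s).symm M).accept := by
    ext x
    cases x <;> simp [completion, removeSink, haccept, -Subtype.exists]
  exact congr (congr (congrArg DFA.mk step_eq) start_eq) accept_eq

theorem accepts_removeSink {M : DFA α ρ} {s : ρ} (hs : M.start ≠ s)
    (hstep : ∀ a, M.step s a = s) (haccept : s ∉ M.accept) :
    (removeSink M s hs).accepts = M.accepts := by
  rw [← accepts_completion, completion_removeSink hs hstep haccept, DFA.accepts_reindex]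

theorem trCountOn_removeSink {M : DFA α ρ} {s : ρ} (hs : M.start ≠ s)
    (hstep : ∀ a, M.step s a = s) (b : α) :
    (removeSink M s hs).trCountOn b = {q | M.step q b ≠ s}.ncard := by
  have subset_range : {q | M.step q b ≠ s} ⊆ Set.range (Subtype.val : {q // q ≠ s} → ρ) := by
    intro q hq
    exact ⟨⟨q, fun h => hq (h ▸ hstep b)⟩, rfl⟩
  rw [← Set.ncard_preimage_of_injective_subset_range Subtype.val_injective subset_range, trCountOn]
  simp only [step_removeSink_isSome_iff, Set.preimage_ofPred_eq]

end IDFA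

/-- A complete DFA that is minimal in the sense of Myhill–Nerode and whose dead state is `s`: the
states other than `s` are reachable, and distinct states have distinct right languages. Deleting
`s` from such a DFA gives the minimal incomplete DFA of the language. -/
structure IsMinimalWithSink {α ρ : Type*} (M : DFA α ρ) (s : ρ) : Prop where
  start_ne : M.start ≠ s
  acceptsFrom_sink : M.acceptsFrom s = 0
  exists_eval_eq : ∀ q ≠ s, ∃ w, M.eval w = q
  injective_acceptsFrom : Function.Injective M.acceptsFrom

namespace IsMinimalWithSink

variable {α ρ τ : Type} {M : DFA α ρ} {s : ρ}

theorem step_sink (hM : IsMinimalWithSink M s) (a : α) : M.step s a = s := by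
  refine hM.injective_acceptsFrom (Language.ext fun w => ?_)
  change a :: w ∈ M.acceptsFrom s ↔ w ∈ M.acceptsFrom s
  rw [hM.acceptsFrom_sink]
  exact iff_of_false (Language.notMem_zero _) (Language.notMem_zero _)

theorem sink_notMem_accept (hM : IsMinimalWithSink M s) : s ∉ M.accept := by
  change [] ∉ M.acceptsFrom s
  rw [hM.acceptsFrom_sink]
  exact Language.notMem_zero _

theorem accepts_removeSink (hM : IsMinimalWithSink M s) :
    (IDFA.removeSink M s hM.start_ne).accepts = M.accepts :=
  IDFA.accepts_removeSink hM.start_ne hM.step_sink hM.sink_notMem_accept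

theorem exists_acceptsFrom_some_eq (hM : IsMinimalWithSink M s) {B : IDFA α τ}
    (hB : B.accepts = M.accepts) {q : ρ} (hq : q ≠ s) :
    ∃ t, B.completion.acceptsFrom (some t) = M.acceptsFrom q := by
  obtain ⟨w, rfl⟩ := hM.exists_eval_eq q hq
  have quotient_eq : B.completion.acceptsFrom (B.completion.eval w) = M.acceptsFrom (M.eval w) := by
    rw [← Language.leftQuotient_accepts_apply, ← Language.leftQuotient_accepts_apply,
      IDFA.accepts_completion, hB]
  cases hw : B.completion.eval w with
  | none =>
    rw [hw, B.acceptsFrom_completion_none, ← hM.acceptsFrom_sink] at quotient_eq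
    exact absurd (hM.injective_acceptsFrom quotient_eq).symm hq
  | some t => exact ⟨t, hw ▸ quotient_eq⟩

theorem isSome_step_of_acceptsFrom_eq (hM : IsMinimalWithSink M s) {B : IDFA α τ} {t : τ} {q : ρ}
    (h : B.completion.acceptsFrom (some t) = M.acceptsFrom q) {b : α} (hb : M.step q b ≠ s) :
    (B.step t b).isSome := by
  rw [Option.isSome_iff_ne_none]
  intro ht
  refine hb (hM.injective_acceptsFrom ?_)
  calc M.acceptsFrom (M.step q b)
      = (M.acceptsFrom q).leftQuotient [b] := rfl
    _ = B.completion.acceptsFrom (B.step t b) := by rw [← h]; rfl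
    _ = M.acceptsFrom s := by rw [ht, B.acceptsFrom_completion_none, hM.acceptsFrom_sink]

theorem exists_injective_forall_isSome_step (hM : IsMinimalWithSink M s) {B : IDFA α τ}
    (hB : B.accepts = M.accepts) :
    ∃ f : {q // q ≠ s} → τ, Function.Injective f ∧
      ∀ q b, ((IDFA.removeSink M s hM.start_ne).step q b).isSome → (B.step (f q) b).isSome := by
  choose f hf using fun q : {q // q ≠ s} => hM.exists_acceptsFrom_some_eq hB q.2
  refine ⟨f, fun p q hpq => Subtype.ext (hM.injective_acceptsFrom ?_), fun q b hstep => ?_⟩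
  · rw [← hf p, ← hf q, hpq]
  · exact hM.isSome_step_of_acceptsFrom_eq (hf q) (IDFA.step_removeSink_isSome_iff.1 hstep)

variable [Finite ρ]

theorem isRegularLang_accepts (hM : IsMinimalWithSink M s) : IsRegularLang M.accepts :=
  ⟨_, inferInstance, _, hM.accepts_removeSink⟩

theorem sc_accepts (hM : IsMinimalWithSink M s) : sc M.accepts = Nat.card ρ - 1 := by
  classical
  have card_eq : Nat.card {q // q ≠ s} = Nat.card ρ - 1 := by
    rw [← Nat.card_congr (Equiv.optionSubtypeNe s), Finite.card_option, Nat.add_sub_cancel]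
  rw [← card_eq]
  refine IsLeast.csInf_eq ⟨⟨_, inferInstance, _, hM.accepts_removeSink, rfl⟩, ?_⟩
  rintro _ ⟨τ, _, B, hB, rfl⟩
  obtain ⟨f, f_injective, -⟩ := hM.exists_injective_forall_isSome_step hB
  exact Nat.card_le_card_of_injective f f_injective

theorem tcOn_accepts (hM : IsMinimalWithSink M s) (b : α) :
    tcOn M.accepts b = {q | M.step q b ≠ s}.ncard := by
  rw [← IDFA.trCountOn_removeSink hM.start_ne hM.step_sink]
  refine IsLeast.csInf_eq ⟨⟨_, inferInstance, _, hM.accepts_removeSink, rfl⟩, ?_⟩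
  rintro _ ⟨τ, _, B, hB, rfl⟩
  obtain ⟨f, f_injective, f_step⟩ := hM.exists_injective_forall_isSome_step hB
  exact Set.ncard_le_ncard_of_injOn f (fun q hq => f_step q b hq) f_injective.injOn

end IsMinimalWithSink

section Product

universe v

variable {α : Type*} {ρ₁ ρ₂ : Type v} (M₁ : DFA α ρ₁) (M₂ : DFA α ρ₂)

theorem evalFrom_union (q₁ : ρ₁) (q₂ : ρ₂) (w : List α) :
    (M₁.union M₂).evalFrom (q₁, q₂) w = (M₁.evalFrom q₁ w, M₂.evalFrom q₂ w) := by
  induction w generalizing q₁ q₂ with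
  | nil => rfl
  | cons _ _ ih => exact ih _ _

theorem ncard_setOf_step_union_ne [Finite ρ₁] [Finite ρ₂] (s₁ : ρ₁) (s₂ : ρ₂) (b : α) :
    {q | (M₁.union M₂).step q b ≠ (s₁, s₂)}.ncard =
      {q | M₁.step q b ≠ s₁}.ncard * {q | M₂.step q b ≠ s₂}.ncard +
      {q | M₁.step q b ≠ s₁}.ncard * (Nat.card ρ₂ - {q | M₂.step q b ≠ s₂}.ncard) +
      {q | M₂.step q b ≠ s₂}.ncard * (Nat.card ρ₁ - {q | M₁.step q b ≠ s₁}.ncard) := by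
  rw [← ncard_setOf_fst_mem_or_snd_mem]
  simp only [DFA.union_step, ne_eq, Prod.mk.injEq, not_and_or, Set.mem_ofPred_eq]

end Product

open Classical in
/-- The completed cyclic automaton on `ℤ/n` with sink `none`: the letter `c` rotates the cycle, and
every other letter `a` fixes the states `0, …, k a - 1` and is undefined elsewhere. The state `0` is
both initial and accepting. -/
noncomputable def cycleDFA {α : Type*} (n : ℕ) (c : α) (k : α → ℕ) :
    DFA α (Option (ZMod n)) where
  step x a := if a = c then x.map (· + 1) else x.filter (ZMod.val · < k a)
  start := some 0
  accept := {some 0}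

section Cycle

variable {α : Type*} {n : ℕ} {c : α} {k : α → ℕ}

theorem cycleDFA_step_of_ne {b : α} (hb : b ≠ c) (x : Option (ZMod n)) :
    (cycleDFA n c k).step x b = x.filter (ZMod.val · < k b) := if_neg hb

theorem cycleDFA_evalFrom_replicate (x : Option (ZMod n)) (m : ℕ) :
    (cycleDFA n c k).evalFrom x (List.replicate m c) = x.map (· + (m : ZMod n)) := by
  induction m generalizing x with
  | zero => simp
  | succ m ih =>
    rw [List.replicate_succ, DFA.evalFrom_cons, ih]
    cases x <;> simp [cycleDFA, add_assoc, add_comm (1 : ZMod n)]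

theorem cycleDFA_eval_replicate (m : ℕ) :
    (cycleDFA n c k).eval (List.replicate m c) = some (m : ZMod n) := by
  rw [DFA.eval, cycleDFA_evalFrom_replicate]
  simp [cycleDFA]

theorem replicate_mem_acceptsFrom_cycleDFA {x : Option (ZMod n)} {m : ℕ} :
    List.replicate m c ∈ (cycleDFA n c k).acceptsFrom x ↔ x = some (-m : ZMod n) := by
  rw [DFA.mem_acceptsFrom, cycleDFA_evalFrom_replicate]
  cases x <;> simp [cycleDFA, eq_neg_iff_add_eq_zero]

theorem acceptsFrom_cycleDFA_none : (cycleDFA n c k).acceptsFrom none = 0 :=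
  acceptsFrom_eq_zero_of_step_eq_self (by simp [cycleDFA]) (by simp [cycleDFA])

theorem isMinimalWithSink_cycleDFA [NeZero n] : IsMinimalWithSink (cycleDFA n c k) none where
  start_ne := nofun
  acceptsFrom_sink := acceptsFrom_cycleDFA_none
  exists_eval_eq := by
    intro x hx
    obtain ⟨i, rfl⟩ := Option.ne_none_iff_exists'.1 hx
    obtain ⟨m, rfl⟩ := ZMod.natCast_zmod_surjective i
    exact ⟨_, cycleDFA_eval_replicate m⟩
  injective_acceptsFrom := by
    refine fun x y hxy => Option.ext fun i => ?_
    obtain ⟨m, hm⟩ := ZMod.natCast_zmod_surjective (-i)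
    obtain rfl : -(m : ZMod n) = i := by rw [hm, neg_neg]
    rw [← replicate_mem_acceptsFrom_cycleDFA (c := c) (k := k), hxy,
      replicate_mem_acceptsFrom_cycleDFA]

theorem ncard_setOf_cycleDFA_step_ne_none [NeZero n] {b : α} (hb : b ≠ c) (hk : k b ≤ n) :
    {x | (cycleDFA n c k).step x b ≠ none}.ncard = k b := by
  have eq_image : {x | (cycleDFA n c k).step x b ≠ none} =
      some '' {i : ZMod n | i.val < k b} := by
    ext x
    cases x <;> simp [cycleDFA_step_of_ne hb]
  rw [eq_image, Set.ncard_image_of_injective _ (Option.some_injective _),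
    ncard_setOf_zmod_val_lt hk]

end Cycle

section UnionOfCycles

variable {α : Type*} {n₁ n₂ : ℕ} {c : α} {k₁ k₂ : α → ℕ}

theorem replicate_mem_acceptsFrom_union_cycleDFA {x : Option (ZMod n₁)} {y : Option (ZMod n₂)}
    {m : ℕ} :
    List.replicate m c ∈ ((cycleDFA n₁ c k₁).union (cycleDFA n₂ c k₂)).acceptsFrom (x, y) ↔
      x = some (-m : ZMod n₁) ∨ y = some (-m : ZMod n₂) := by
  rw [DFA.acceptsFrom_union, Language.mem_add, replicate_mem_acceptsFrom_cycleDFA,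
    replicate_mem_acceptsFrom_cycleDFA]

variable [NeZero n₁] [NeZero n₂]

theorem exists_cycleDFA_eval_eq_some_some (hcop : Nat.Coprime n₁ n₂) (i : ZMod n₁) (j : ZMod n₂) :
    ∃ w, (cycleDFA n₁ c k₁).eval w = some i ∧ (cycleDFA n₂ c k₂).eval w = some j := by
  obtain ⟨t, rfl, rfl⟩ := exists_natCast_zmod_eq_and_eq_s7 hcop i j
  exact ⟨_, cycleDFA_eval_replicate t, cycleDFA_eval_replicate t⟩

theorem exists_cycleDFA_eval_eq_none_some (hcop : Nat.Coprime n₁ n₂) {b : α} (hb : b ≠ c)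
    (hk₁ : k₁ b < n₁) (hk₂ : 0 < k₂ b) (j : ZMod n₂) :
    ∃ w, (cycleDFA n₁ c k₁).eval w = none ∧ (cycleDFA n₂ c k₂).eval w = some j := by
  -- Rotate to `(k₁ b, 0)`, where `b` is undefined in the first cycle only; read `b`; rotate on.
  obtain ⟨w, hw₁, hw₂⟩ := exists_cycleDFA_eval_eq_some_some (c := c) (k₁ := k₁) (k₂ := k₂) hcop
    (k₁ b : ZMod n₁) 0
  obtain ⟨m, rfl⟩ := ZMod.natCast_zmod_surjective j
  have step₁ : (cycleDFA n₁ c k₁).step (some (k₁ b : ZMod n₁)) b = none := by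
    simp [cycleDFA_step_of_ne hb, ZMod.val_natCast_of_lt hk₁]
  have step₂ : (cycleDFA n₂ c k₂).step (some 0) b = some 0 := by
    simp [cycleDFA_step_of_ne hb, hk₂]
  refine ⟨w ++ b :: List.replicate m c, ?_, ?_⟩
  · rw [DFA.eval, DFA.evalFrom_of_append, ← DFA.eval, hw₁, DFA.evalFrom_cons, step₁,
      cycleDFA_evalFrom_replicate, Option.map_none]
  · rw [DFA.eval, DFA.evalFrom_of_append, ← DFA.eval, hw₂, DFA.evalFrom_cons, step₂,
      cycleDFA_evalFrom_replicate, Option.map_some, zero_add]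

theorem exists_cycleDFA_eval_eq (hcop : Nat.Coprime n₁ n₂) {b : α} (hb : b ≠ c)
    (hk₁ : 1 ≤ k₁ b ∧ k₁ b < n₁) (hk₂ : 1 ≤ k₂ b ∧ k₂ b < n₂) {x : Option (ZMod n₁)}
    {y : Option (ZMod n₂)} (hxy : (x, y) ≠ (none, none)) :
    ∃ w, (cycleDFA n₁ c k₁).eval w = x ∧ (cycleDFA n₂ c k₂).eval w = y := by
  rcases x with _ | i <;> rcases y with _ | j
  · exact absurd rfl hxy
  · exact exists_cycleDFA_eval_eq_none_some hcop hb hk₁.2 hk₂.1 j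
  · exact (exists_cycleDFA_eval_eq_none_some hcop.symm hb hk₂.2 hk₁.1 i).imp fun _ => And.symm
  · exact exists_cycleDFA_eval_eq_some_some hcop i j

theorem eq_some_or_eq_some_iff_of_acceptsFrom_union_cycleDFA_eq (hcop : Nat.Coprime n₁ n₂)
    {x x' : Option (ZMod n₁)} {y y' : Option (ZMod n₂)}
    (h : ((cycleDFA n₁ c k₁).union (cycleDFA n₂ c k₂)).acceptsFrom (x, y) =
      ((cycleDFA n₁ c k₁).union (cycleDFA n₂ c k₂)).acceptsFrom (x', y'))
    (i : ZMod n₁) (j : ZMod n₂) :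
    (x = some i ∨ y = some j) ↔ (x' = some i ∨ y' = some j) := by
  obtain ⟨t, hi, hj⟩ := exists_natCast_zmod_eq_and_eq_s7 hcop (-i) (-j)
  obtain rfl : -(t : ZMod n₁) = i := by rw [hi, neg_neg]
  obtain rfl : -(t : ZMod n₂) = j := by rw [hj, neg_neg]
  rw [← replicate_mem_acceptsFrom_union_cycleDFA (c := c) (k₁ := k₁) (k₂ := k₂), h,
    replicate_mem_acceptsFrom_union_cycleDFA]

theorem injective_acceptsFrom_union_cycleDFA (hn₁ : 1 < n₁) (hn₂ : 1 < n₂)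
    (hcop : Nat.Coprime n₁ n₂) :
    Function.Injective ((cycleDFA n₁ c k₁).union (cycleDFA n₂ c k₂)).acceptsFrom := by
  have : Fact (1 < n₁) := ⟨hn₁⟩
  have : Fact (1 < n₂) := ⟨hn₂⟩
  rintro ⟨x, y⟩ ⟨x', y'⟩ h
  have same_states := eq_some_or_eq_some_iff_of_acceptsFrom_union_cycleDFA_eq hcop h
  have same_states_swap (j : ZMod n₂) (i : ZMod n₁) :
      (y = some j ∨ x = some i) ↔ (y' = some j ∨ x' = some i) := by
    simpa only [or_comm] using same_states i j
  exact Prod.ext (option_eq_of_forall_or_iff same_states)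
    (option_eq_of_forall_or_iff same_states_swap)

theorem isMinimalWithSink_union_cycleDFA (hcop : Nat.Coprime n₁ n₂) {b : α} (hb : b ≠ c)
    (hk₁ : 1 ≤ k₁ b ∧ k₁ b < n₁) (hk₂ : 1 ≤ k₂ b ∧ k₂ b < n₂) :
    IsMinimalWithSink ((cycleDFA n₁ c k₁).union (cycleDFA n₂ c k₂)) (none, none) where
  start_ne := nofun
  acceptsFrom_sink := by
    rw [DFA.acceptsFrom_union, acceptsFrom_cycleDFA_none, acceptsFrom_cycleDFA_none, add_zero]
  exists_eval_eq := by
    rintro ⟨x, y⟩ hxy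
    obtain ⟨w, rfl, rfl⟩ := exists_cycleDFA_eval_eq (k₁ := k₁) (k₂ := k₂) hcop hb hk₁ hk₂ hxy
    exact ⟨w, evalFrom_union _ _ _ _ w⟩
  injective_acceptsFrom :=
    injective_acceptsFrom_union_cycleDFA (hk₁.1.trans_lt hk₁.2) (hk₂.1.trans_lt hk₂.2) hcop

end UnionOfCycles

section Complexity

variable {α : Type} {c : α}

theorem sc_accepts_cycleDFA {n : ℕ} [NeZero n] {k : α → ℕ} : sc (cycleDFA n c k).accepts = n := by
  rw [isMinimalWithSink_cycleDFA.sc_accepts, Finite.card_option, Nat.card_zmod,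
    Nat.add_sub_cancel]

theorem tcOn_accepts_cycleDFA {n : ℕ} [NeZero n] {k : α → ℕ} {b : α} (hb : b ≠ c) (hk : k b ≤ n) :
    tcOn (cycleDFA n c k).accepts b = k b := by
  rw [isMinimalWithSink_cycleDFA.tcOn_accepts, ncard_setOf_cycleDFA_step_ne_none hb hk]

theorem tcOn_union_accepts_cycleDFA {n₁ n₂ : ℕ} [NeZero n₁] [NeZero n₂] {k₁ k₂ : α → ℕ}
    (hcop : Nat.Coprime n₁ n₂) {b : α} (hb : b ≠ c) (hk₁ : 1 ≤ k₁ b ∧ k₁ b < n₁)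
    (hk₂ : 1 ≤ k₂ b ∧ k₂ b < n₂) :
    tcOn ((cycleDFA n₁ c k₁).accepts ∪ (cycleDFA n₂ c k₂).accepts) b =
      k₁ b * k₂ b + k₁ b * (1 + n₂ - k₂ b) + k₂ b * (1 + n₁ - k₁ b) := by
  rw [← Language.add_def, ← DFA.accepts_union,
    (isMinimalWithSink_union_cycleDFA hcop hb hk₁ hk₂).tcOn_accepts, ncard_setOf_step_union_ne,
    ncard_setOf_cycleDFA_step_ne_none hb hk₁.2.le, ncard_setOf_cycleDFA_step_ne_none hb hk₂.2.le,
    Finite.card_option, Finite.card_option, Nat.card_zmod, Nat.card_zmod, add_comm n₁,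
    add_comm n₂]

end Complexity

theorem tcOn_union_simultaneous_lower_bound_general {α : Type} (c : α) (n₁ n₂ : ℕ) [NeZero n₁]
    [NeZero n₂] (hcop : Nat.Coprime n₁ n₂) (k₁ k₂ : α → ℕ)
    (hk₁ : ∀ b : α, b ≠ c → 1 ≤ k₁ b ∧ k₁ b < n₁)
    (hk₂ : ∀ b : α, b ≠ c → 1 ≤ k₂ b ∧ k₂ b < n₂) :
    ∃ L₁ L₂ : Set (List α), IsRegularLang L₁ ∧ IsRegularLang L₂ ∧
      sc L₁ = n₁ ∧ sc L₂ = n₂ ∧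
      (∀ b : α, b ≠ c → tcOn L₁ b = k₁ b ∧ tcOn L₂ b = k₂ b) ∧
      (∀ b : α, b ≠ c →
        tcOn (L₁ ∪ L₂) b =
          k₁ b * k₂ b + k₁ b * (1 + n₂ - k₂ b) + k₂ b * (1 + n₁ - k₁ b)) :=
  ⟨(cycleDFA n₁ c k₁).accepts, (cycleDFA n₂ c k₂).accepts,
    isMinimalWithSink_cycleDFA.isRegularLang_accepts,
    isMinimalWithSink_cycleDFA.isRegularLang_accepts,
    sc_accepts_cycleDFA, sc_accepts_cycleDFA,
    fun b hb =>
      ⟨tcOn_accepts_cycleDFA hb (hk₁ b hb).2.le, tcOn_accepts_cycleDFA hb (hk₂ b hb).2.le⟩,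
    fun b hb => tcOn_union_accepts_cycleDFA hcop hb (hk₁ b hb) (hk₂ b hb)⟩

/-- the lower bound construction for the `b`-transition complexity
of union can be realized simultaneously for all symbols `b ≠ c`. -/
theorem tcOn_union_simultaneous_lower_bound {α : Type} [Finite α] (hcard : 2 ≤ Nat.card α)
    (c : α) (n₁ n₂ : ℕ) (hn₁ : 2 ≤ n₁) (hn₂ : 2 ≤ n₂) (hcop : Nat.Coprime n₁ n₂)
    (k₁ k₂ : α → ℕ)
    (hk₁ : ∀ b : α, b ≠ c → 1 ≤ k₁ b ∧ k₁ b < n₁)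
    (hk₂ : ∀ b : α, b ≠ c → 1 ≤ k₂ b ∧ k₂ b < n₂) :
    ∃ L₁ L₂ : Set (List α), IsRegularLang L₁ ∧ IsRegularLang L₂ ∧
      sc L₁ = n₁ ∧ sc L₂ = n₂ ∧
      (∀ b : α, b ≠ c → tcOn L₁ b = k₁ b ∧ tcOn L₂ b = k₂ b) ∧
      (∀ b : α, b ≠ c →
        tcOn (L₁ ∪ L₂) b =
          k₁ b * k₂ b + k₁ b * (1 + n₂ - k₂ b) + k₂ b * (1 + n₁ - k₁ b)) := by
  have : NeZero n₁ := ⟨by lia⟩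
  have : NeZero n₂ := ⟨by lia⟩
  exact tcOn_union_simultaneous_lower_bound_general c n₁ n₂ hcop k₁ k₂ hk₁ hk₂
end

section
/- Let L₁ and L₂ be regular languages over a finite alphabet Σ. If there exists a symbol c ∈ Σ such that in the minimal incomplete DFA for Lᵢ (i = 1, 2) all c-transitions are defined (i.e. tc_c(Lᵢ) = sc(Lᵢ)), then tc(L₁ ∪ L₂) ≤ tc(L₁)·tc(L₂) + tc(L₁) + tc(L₂) − 1. -/
/-!
The minimal incomplete DFA of `L` is the automaton of nonempty left quotients of `L`: it embeds,
transition by transition, into every incomplete DFA for `L`, so it realises `tc L` and `sc L`, and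
`tc_c(L) = sc(L)` says that `c` is defined in all of its states.

Let `A` and `B` be the minimal automata of `L₁` and `L₂`, completed by a sink `none`, and run them
in parallel. Transitions out of `(p, none)` and `(none, q)` number at most `#tr(A) + #tr(B)`. A
`b`-transition out of `(p, q)` is encoded as `((p, b), (q, c))` if `A` has a `b`-transition at `p`,
and as `((p, c), (q, b))` otherwise; this is injective and uses only pairs in which `c` occurs, so
there are at most `#tr(A) · #tr(B)` of them. It remains to save one transition. If both automata
have transitions on symbols other than `c`, some pair is missed by the encoding. Otherwise one of
them, say `A`, moves only by `c`, so `B` cannot die before `A`, and the states `(p, none)` can be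
discarded.
-/

section regular

variable {α : Type} {L : Language α}

theorem tcOn_zero (c : α) : tcOn (0 : Language α) c = 0 := by
  let A : IDFA α Unit := ⟨fun _ _ => none, (), ∅⟩
  have hA : A.accepts = (0 : Language α) := by
    ext w
    exact iff_of_false (fun ⟨_, hq, _⟩ => hq) (Language.notMem_zero w)
  have hcount : A.trCountOn c = 0 := by simp [A, IDFA.trCountOn]
  exact Nat.le_zero.mp (Nat.sInf_le ⟨Unit, inferInstance, A, hA, hcount⟩)

theorem exists_trCount_eq_tc (h : IsRegularLang L) :
    ∃ (σ : Type) (_ : Finite σ) (A : IDFA α σ), A.accepts = L ∧ A.trCount = tc L := by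
  obtain ⟨σ, hσ, A, hA⟩ := h
  have hmem : tc L ∈ {n | _} := Nat.sInf_mem ⟨_, σ, hσ, A, hA, rfl⟩
  exact hmem

theorem exists_card_eq_sc (h : IsRegularLang L) :
    ∃ (σ : Type) (_ : Finite σ) (A : IDFA α σ), A.accepts = L ∧ Nat.card σ = sc L := by
  obtain ⟨σ, hσ, A, hA⟩ := h
  have hmem : sc L ∈ {n | _} := Nat.sInf_mem ⟨_, σ, hσ, A, hA, rfl⟩
  exact hmem

theorem sc_pos (h : IsRegularLang L) : 0 < sc L := by
  obtain ⟨σ, _, A, -, hcard⟩ := exists_card_eq_sc h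
  have : Nonempty σ := ⟨A.start⟩
  exact hcard ▸ Nat.card_pos

theorem ne_zero_of_tcOn_eq_sc (h : IsRegularLang L) {c : α} (hc : tcOn L c = sc L) : L ≠ 0 := by
  rintro rfl
  exact (sc_pos h).ne (tcOn_zero c ▸ hc)

end regular

namespace IDFA

variable {α σ τ : Type}

/-- The set of defined transitions of `A`, each given by its source and its symbol. -/
def transitions (A : IDFA α σ) : Set (σ × α) :=
  {x | (A.step x.1 x.2).isSome}

/-- All `c`-transitions of `A` are defined, that is, `c` is a complete symbol of `A`. -/
def IsCompleteOn (A : IDFA α σ) (c : α) : Prop :=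
  ∀ q, (A.step q c).isSome

/-- The completion of `A`: undefined transitions lead to the added sink state `none`. -/
def toDFA (A : IDFA α σ) : DFA α (Option σ) where
  step x a := x.bind fun p => A.step p a
  start := some A.start
  accept := some '' A.accept

theorem accepts_toDFA (A : IDFA α σ) : A.toDFA.accepts = A.accepts := by
  ext w
  exact exists_congr fun q => and_congr_right fun _ => eq_comm

theorem acceptsFrom_toDFA_none (A : IDFA α σ) : A.toDFA.acceptsFrom none = 0 := by
  ext w
  induction w with
  | nil => simp [DFA.mem_acceptsFrom, toDFA]
  | cons _ _ ih => exact ih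

open Classical in
/-- The incomplete DFA on the states in `R` of a complete DFA `M`, in which the transitions of `M`
that leave `R` are undefined. It recognizes the same language if these lead to dead states. -/
noncomputable def ofDFA (M : DFA α σ) (R : Set σ) (hstart : M.start ∈ R) : IDFA α R where
  step s a := if h : M.step s a ∈ R then some ⟨M.step s a, h⟩ else none
  start := ⟨M.start, hstart⟩
  accept := {s | s.1 ∈ M.accept}

section ofDFA

variable {M : DFA α σ} {R : Set σ} {hstart : M.start ∈ R}

theorem isSome_step_ofDFA {s : R} {a : α} :
    ((ofDFA M R hstart).step s a).isSome ↔ M.step s a ∈ R := by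
  by_cases h : M.step s a ∈ R <;> simp [ofDFA, h]

theorem trCount_ofDFA :
    (ofDFA M R hstart).trCount = {x : σ × α | x.1 ∈ R ∧ M.step x.1 x.2 ∈ R}.ncard := by
  have hinj : Function.Injective (Prod.map Subtype.val id : R × α → σ × α) :=
    Subtype.val_injective.prodMap Function.injective_id
  rw [trCount, ← Set.ncard_image_of_injective _ hinj]
  congr 1
  ext ⟨s, a⟩
  simp [isSome_step_ofDFA, and_comm]

theorem mem_acceptsFrom_toDFA_ofDFA
    (hdead : ∀ s ∈ R, ∀ a, M.step s a ∉ R → M.acceptsFrom (M.step s a) = 0) (w : List α) (s : R) :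
    w ∈ (ofDFA M R hstart).toDFA.acceptsFrom (some s) ↔ w ∈ M.acceptsFrom s := by
  induction w generalizing s with
  | nil => simp [DFA.mem_acceptsFrom, toDFA, ofDFA]
  | cons a w ih =>
    change w ∈ (ofDFA M R hstart).toDFA.acceptsFrom ((ofDFA M R hstart).step s a) ↔
      w ∈ M.acceptsFrom (M.step s a)
    by_cases h : M.step s a ∈ R
    · have hstep : (ofDFA M R hstart).step s a = some ⟨M.step s a, h⟩ := dif_pos h
      rw [hstep, ih]
    · have hstep : (ofDFA M R hstart).step s a = none := dif_neg h
      rw [hstep, acceptsFrom_toDFA_none, hdead s s.2 a h]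

theorem accepts_ofDFA (hdead : ∀ s ∈ R, ∀ a, M.step s a ∉ R → M.acceptsFrom (M.step s a) = 0) :
    (ofDFA M R hstart).accepts = M.accepts := by
  rw [← accepts_toDFA]
  ext w
  exact mem_acceptsFrom_toDFA_ofDFA hdead w ⟨M.start, hstart⟩

end ofDFA

theorem tc_accepts_le_trCount [Finite σ] (A : IDFA α σ) : tc A.accepts ≤ A.trCount :=
  Nat.sInf_le ⟨σ, ‹_›, A, rfl, rfl⟩

theorem tcOn_accepts_le_trCountOn [Finite σ] (A : IDFA α σ) (c : α) :
    tcOn A.accepts c ≤ A.trCountOn c :=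
  Nat.sInf_le ⟨σ, ‹_›, A, rfl, rfl⟩

theorem tc_accepts_le_ncard_of_dead [Finite σ] (M : DFA α σ) {R : Set σ} (hstart : M.start ∈ R)
    (hdead : ∀ s ∈ R, ∀ a, M.step s a ∉ R → M.acceptsFrom (M.step s a) = 0) :
    tc M.accepts ≤ {x : σ × α | x.1 ∈ R ∧ M.step x.1 x.2 ∈ R}.ncard := by
  rw [← accepts_ofDFA (hstart := hstart) hdead, ← trCount_ofDFA (hstart := hstart)]
  exact tc_accepts_le_trCount _

/-- The nonempty left quotients of `L`, the states of its minimal incomplete DFA. -/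
def liveQuotients (L : Language α) : Set (Set.range L.leftQuotient) :=
  {K | K.1 ≠ 0}

/-- The minimal incomplete DFA of a nonempty language: its automaton of left quotients without the
empty quotient. -/
noncomputable def minimal (L : Language α) (hL : L ≠ 0) : IDFA α (liveQuotients L) :=
  ofDFA L.toDFA (liveQuotients L) hL

section minimal

variable {L : Language α}

theorem isSome_step_minimal {hL : L ≠ 0} {K : liveQuotients L} {a : α} :
    ((minimal L hL).step K a).isSome ↔ K.1.1.leftQuotient [a] ≠ 0 :=
  isSome_step_ofDFA

theorem acceptsFrom_language_toDFA (K : Set.range L.leftQuotient) :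
    L.toDFA.acceptsFrom K = K.1 := by
  ext w
  induction w generalizing K with
  | nil => rfl
  | cons a _ ih => exact ih _

theorem accepts_minimal (hL : L ≠ 0) : (minimal L hL).accepts = L := by
  refine (accepts_ofDFA fun K _ a hdead => ?_).trans L.accepts_toDFA
  rw [acceptsFrom_language_toDFA]
  exact not_not.mp hdead

theorem exists_acceptsFrom_toDFA_eq (A : IDFA α σ) (hA : A.accepts = L) (K : liveQuotients L) :
    ∃ q, A.toDFA.acceptsFrom (some q) = K.1.1 := by
  obtain ⟨⟨_, w, rfl⟩, hlive : L.leftQuotient w ≠ 0⟩ := K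
  have hquot : L.leftQuotient w = A.toDFA.acceptsFrom (A.toDFA.eval w) := by
    rw [← Language.leftQuotient_accepts_apply, accepts_toDFA, hA]
  cases hw : A.toDFA.eval w with
  | none => exact absurd (by rw [hquot, hw, acceptsFrom_toDFA_none]) hlive
  | some q => exact ⟨q, hw ▸ hquot.symm⟩

theorem exists_embedding_liveQuotients (A : IDFA α σ) (hA : A.accepts = L) :
    ∃ f : liveQuotients L ↪ σ, ∀ K, A.toDFA.acceptsFrom (some (f K)) = K.1.1 := by
  choose f hf using exists_acceptsFrom_toDFA_eq A hA
  have hinj : Function.Injective f := fun K K' h => by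
    rw [Subtype.ext_iff, Subtype.ext_iff, ← hf K, ← hf K', h]
  exact ⟨⟨f, hinj⟩, hf⟩

theorem isSome_step_of_isSome_step_minimal (A : IDFA α σ) {hL : L ≠ 0} {K : liveQuotients L}
    {q : σ} (hq : A.toDFA.acceptsFrom (some q) = K.1.1) {a : α}
    (h : ((minimal L hL).step K a).isSome) : (A.step q a).isSome := by
  contrapose h
  rw [isSome_step_minimal, not_not]
  calc K.1.1.leftQuotient [a]
    _ = A.toDFA.acceptsFrom (A.step q a) := by rw [← hq]; rfl
    _ = A.toDFA.acceptsFrom none := congrArg _ (Option.not_isSome_iff_eq_none.mp h)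
    _ = 0 := A.acceptsFrom_toDFA_none

theorem finite_liveQuotients (h : IsRegularLang L) : Finite (liveQuotients L) := by
  obtain ⟨σ, _, A, hA⟩ := h
  obtain ⟨f, -⟩ := exists_embedding_liveQuotients A hA
  exact Finite.of_injective f f.injective

theorem card_liveQuotients_le_sc (h : IsRegularLang L) : Nat.card (liveQuotients L) ≤ sc L := by
  obtain ⟨σ, _, A, hA, hcard⟩ := exists_card_eq_sc h
  obtain ⟨f, -⟩ := exists_embedding_liveQuotients A hA
  exact hcard ▸ Nat.card_le_card_of_injective f f.injective

theorem trCount_minimal_le_tc [Finite α] (h : IsRegularLang L) (hL : L ≠ 0) :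
    (minimal L hL).trCount ≤ tc L := by
  obtain ⟨σ, _, A, hA, htr⟩ := exists_trCount_eq_tc h
  obtain ⟨f, hf⟩ := exists_embedding_liveQuotients A hA
  rw [← htr]
  exact Set.ncard_le_ncard_of_injOn (Prod.map f id)
    (fun x hx => A.isSome_step_of_isSome_step_minimal (hf x.1) hx)
    (f.injective.prodMap Function.injective_id).injOn

theorem isCompleteOn_minimal (h : IsRegularLang L) (hL : L ≠ 0) {c : α} (hc : tcOn L c = sc L) :
    (minimal L hL).IsCompleteOn c := by
  have := finite_liveQuotients h
  have hle : Nat.card (liveQuotients L) ≤ (minimal L hL).trCountOn c :=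
    calc Nat.card (liveQuotients L)
      _ ≤ sc L := card_liveQuotients_le_sc h
      _ = tcOn (minimal L hL).accepts c := by rw [accepts_minimal, hc]
      _ ≤ (minimal L hL).trCountOn c := tcOn_accepts_le_trCountOn _ c
  exact Set.eq_univ_iff_forall.mp <|
    (Set.eq_univ_iff_ncard _).mpr ((Set.ncard_le_card _).antisymm hle)

theorem exists_isCompleteOn_trCount_eq_tc [Finite α] (h : IsRegularLang L) {c : α}
    (hc : tcOn L c = sc L) :
    ∃ (σ : Type) (_ : Finite σ) (A : IDFA α σ),
      A.accepts = L ∧ A.trCount = tc L ∧ A.IsCompleteOn c := by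
  have hL := ne_zero_of_tcOn_eq_sc h hc
  have := finite_liveQuotients h
  have htc : tc L ≤ (minimal L hL).trCount := by
    simpa only [accepts_minimal] using tc_accepts_le_trCount (minimal L hL)
  exact ⟨_, this, minimal L hL, accepts_minimal hL, (trCount_minimal_le_tc h hL).antisymm htc,
    isCompleteOn_minimal h hL hc⟩

end minimal

/-- The transitions out of a pair `(p, q)` of proper states in the parallel run of `A` and `B`:
those on symbols on which at least one of the two automata survives. -/
def jointTransitions (A : IDFA α σ) (B : IDFA α τ) : Set ((σ × τ) × α) :=
  {x | (A.step x.1.1 x.2).isSome ∨ (B.step x.1.2 x.2).isSome}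

open Classical in
/-- Encodes a joint transition by a pair of transitions of `A` and `B`, one of them on `c`. -/
noncomputable def encodeJoint (A : IDFA α σ) (c : α) (x : (σ × τ) × α) : (σ × α) × (τ × α) :=
  if (A.step x.1.1 x.2).isSome then ((x.1.1, x.2), (x.1.2, c)) else ((x.1.1, c), (x.1.2, x.2))

section jointTransitions

variable {A : IDFA α σ} {B : IDFA α τ} {c : α}

theorem encodeJoint_mem (hA : A.IsCompleteOn c) (hB : B.IsCompleteOn c) {x : (σ × τ) × α}
    (hx : x ∈ jointTransitions A B) :
    encodeJoint A c x ∈ {z ∈ A.transitions ×ˢ B.transitions | z.1.2 = c ∨ z.2.2 = c} := by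
  unfold encodeJoint
  split_ifs with hstep
  · exact ⟨⟨hstep, hB _⟩, .inr rfl⟩
  · exact ⟨⟨hA _, hx.resolve_left hstep⟩, .inl rfl⟩

theorem injective_encodeJoint (hA : A.IsCompleteOn c) :
    Function.Injective (encodeJoint A c : (σ × τ) × α → (σ × α) × (τ × α)) := by
  rintro ⟨⟨p, q⟩, b⟩ ⟨⟨p', q'⟩, b'⟩ h
  have hc := hA p
  -- If the two branches of the encoding collide, both symbols are `c`, which `A` can read at `p`.
  grind [encodeJoint]

variable [Finite α] [Finite σ] [Finite τ]

theorem ncard_jointTransitions_le (hA : A.IsCompleteOn c) (hB : B.IsCompleteOn c) :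
    (jointTransitions A B).ncard ≤
      {z ∈ A.transitions ×ˢ B.transitions | z.1.2 = c ∨ z.2.2 = c}.ncard :=
  Set.ncard_le_ncard_of_injOn (encodeJoint A c) (fun _ => encodeJoint_mem hA hB)
    (injective_encodeJoint hA).injOn

theorem ncard_jointTransitions_le_mul (hA : A.IsCompleteOn c) (hB : B.IsCompleteOn c) :
    (jointTransitions A B).ncard ≤ A.trCount * B.trCount :=
  calc (jointTransitions A B).ncard
    _ ≤ _ := ncard_jointTransitions_le hA hB
    _ ≤ (A.transitions ×ˢ B.transitions).ncard := Set.ncard_le_ncard (Set.sep_subset _ _)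
    _ = A.trCount * B.trCount := Set.ncard_prod

theorem ncard_jointTransitions_lt_mul (hA : A.IsCompleteOn c) (hB : B.IsCompleteOn c)
    (hAc : ∃ x ∈ A.transitions, x.2 ≠ c) (hBc : ∃ y ∈ B.transitions, y.2 ≠ c) :
    (jointTransitions A B).ncard < A.trCount * B.trCount := by
  obtain ⟨x, hx, hxc⟩ := hAc
  obtain ⟨y, hy, hyc⟩ := hBc
  have hssub : {z ∈ A.transitions ×ˢ B.transitions | z.1.2 = c ∨ z.2.2 = c} ⊂
      A.transitions ×ˢ B.transitions :=
    Set.ssubset_iff_exists.mpr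
      ⟨Set.sep_subset _ _, (x, y), ⟨hx, hy⟩, fun h => not_or.mpr ⟨hxc, hyc⟩ h.2⟩
  calc (jointTransitions A B).ncard
    _ ≤ _ := ncard_jointTransitions_le hA hB
    _ < (A.transitions ×ˢ B.transitions).ncard := Set.ncard_lt_ncard hssub
    _ = A.trCount * B.trCount := Set.ncard_prod

end jointTransitions

section union

variable (A : IDFA α σ) (B : IDFA α τ)

theorem accepts_union_toDFA : (A.toDFA.union B.toDFA).accepts = A.accepts ∪ B.accepts := by
  rw [DFA.accepts_union, accepts_toDFA, accepts_toDFA]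
  rfl

theorem acceptsFrom_union_toDFA_none : (A.toDFA.union B.toDFA).acceptsFrom (none, none) = 0 := by
  rw [DFA.acceptsFrom_union, acceptsFrom_toDFA_none, acceptsFrom_toDFA_none, add_zero]

theorem tc_union_le_ncard_of_sink [Finite σ] [Finite τ] {R : Set (Option σ × Option τ)}
    (hstart : (some A.start, some B.start) ∈ R)
    (hsink : ∀ s ∈ R, ∀ a, (A.toDFA.union B.toDFA).step s a ∉ R →
      (A.toDFA.union B.toDFA).step s a = (none, none)) :
    tc (A.accepts ∪ B.accepts) ≤
      {x : _ × α | x.1 ∈ R ∧ (A.toDFA.union B.toDFA).step x.1 x.2 ∈ R}.ncard := by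
  rw [← accepts_union_toDFA]
  refine tc_accepts_le_ncard_of_dead _ hstart fun s hs a hstep => ?_
  rw [hsink s hs a hstep, acceptsFrom_union_toDFA_none]

variable [Finite α] [Finite σ] [Finite τ]

theorem tc_union_le_ncard_jointTransitions_add :
    tc (A.accepts ∪ B.accepts) ≤ (jointTransitions A B).ncard + A.trCount + B.trCount := by
  let R : Set (Option σ × Option τ) := {s | s ≠ (none, none)}
  have hsub : {x | x.1 ∈ R ∧ (A.toDFA.union B.toDFA).step x.1 x.2 ∈ R} ⊆
      (fun x => ((some x.1.1, some x.1.2), x.2)) '' jointTransitions A B ∪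
      (fun x => ((some x.1, none), x.2)) '' A.transitions ∪
      (fun x => ((none, some x.1), x.2)) '' B.transitions := by
    rintro ⟨⟨_ | p, _ | q⟩, a⟩ ⟨hs, hstep⟩ <;>
      simp_all [R, toDFA, jointTransitions, transitions, Option.isSome_iff_ne_none,
        or_iff_not_imp_left]
  calc tc (A.accepts ∪ B.accepts)
    _ ≤ _ := tc_union_le_ncard_of_sink A B (R := R) (by simp [R]) fun _ _ _ => not_not.mp
    _ ≤ _ := Set.ncard_le_ncard hsub
    _ ≤ _ := (Set.ncard_union_le _ _).trans (Nat.add_le_add_right (Set.ncard_union_le _ _) _)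
    _ ≤ (jointTransitions A B).ncard + A.trCount + B.trCount := by
      gcongr <;> exact Set.ncard_image_le

theorem tc_union_le_ncard_jointTransitions_add_right
    (h : ∀ p b, (A.step p b).isSome → B.IsCompleteOn b) :
    tc (A.accepts ∪ B.accepts) ≤ (jointTransitions A B).ncard + B.trCount := by
  let R : Set (Option σ × Option τ) := {s | s.2.isSome}
  have hsink : ∀ s ∈ R, ∀ a, (A.toDFA.union B.toDFA).step s a ∉ R →
      (A.toDFA.union B.toDFA).step s a = (none, none) := by
    rintro ⟨x, _ | q⟩ hs a hstep
    · cases hs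
    have hB : B.step q a = none := Option.not_isSome_iff_eq_none.mp hstep
    have hA : ∀ p, A.step p a = none := fun p =>
      Option.not_isSome_iff_eq_none.mp fun hp => hstep (h p a hp q)
    cases x <;> simp [toDFA, hA, hB]
  have hsub : {x | x.1 ∈ R ∧ (A.toDFA.union B.toDFA).step x.1 x.2 ∈ R} ⊆
      (fun x => ((some x.1.1, some x.1.2), x.2)) '' jointTransitions A B ∪
      (fun x => ((none, some x.1), x.2)) '' B.transitions := by
    rintro ⟨⟨_ | p, _ | q⟩, a⟩ ⟨hs, hstep⟩ <;>
      simp_all [R, toDFA, jointTransitions, transitions]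
  calc tc (A.accepts ∪ B.accepts)
    _ ≤ _ := tc_union_le_ncard_of_sink A B (R := R) rfl hsink
    _ ≤ _ := Set.ncard_le_ncard hsub
    _ ≤ _ := Set.ncard_union_le _ _
    _ ≤ (jointTransitions A B).ncard + B.trCount := by
      gcongr <;> exact Set.ncard_image_le

variable {A B}

theorem IsCompleteOn.trCount_pos {c : α} (hA : A.IsCompleteOn c) : 0 < A.trCount :=
  (Set.ncard_pos).mpr ⟨(A.start, c), hA A.start⟩

theorem tc_union_lt_of_forall_transitions_eq {c : α} (hA : A.IsCompleteOn c)
    (hB : B.IsCompleteOn c) (hAc : ∀ x ∈ A.transitions, x.2 = c) :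
    tc (A.accepts ∪ B.accepts) < A.trCount * B.trCount + A.trCount + B.trCount := by
  have hcomplete : ∀ p b, (A.step p b).isSome → B.IsCompleteOn b := by
    intro p b hb
    obtain rfl : b = c := hAc (p, b) hb
    exact hB
  have htc := tc_union_le_ncard_jointTransitions_add_right A B hcomplete
  have hjoint := ncard_jointTransitions_le_mul hA hB
  have hpos := hA.trCount_pos
  lia

theorem tc_union_lt_of_isCompleteOn {c : α} (hA : A.IsCompleteOn c) (hB : B.IsCompleteOn c) :
    tc (A.accepts ∪ B.accepts) < A.trCount * B.trCount + A.trCount + B.trCount := by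
  by_cases hAc : ∀ x ∈ A.transitions, x.2 = c
  · exact tc_union_lt_of_forall_transitions_eq hA hB hAc
  by_cases hBc : ∀ x ∈ B.transitions, x.2 = c
  · have := tc_union_lt_of_forall_transitions_eq hB hA hBc
    rwa [Set.union_comm, mul_comm, add_right_comm] at this
  push Not at hAc hBc
  have htc := tc_union_le_ncard_jointTransitions_add A B
  have hjoint := ncard_jointTransitions_lt_mul hA hB hAc hBc
  lia

end union

end IDFA

/-- if for some symbol `c` all `c`-transitions are defined in the
minimal incomplete DFAs of `L₁` and of `L₂` (i.e. `tc_c(Lᵢ) = sc(Lᵢ)`), then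
`tc(L₁ ∪ L₂) ≤ tc(L₁)·tc(L₂) + tc(L₁) + tc(L₂) - 1`. -/
theorem tc_union_le_of_complete_symbol {α : Type} [Finite α]
    (L₁ L₂ : Set (List α)) (h₁ : IsRegularLang L₁) (h₂ : IsRegularLang L₂)
    (hc : ∃ c : α, tcOn L₁ c = sc L₁ ∧ tcOn L₂ c = sc L₂) :
    tc (L₁ ∪ L₂) ≤ tc L₁ * tc L₂ + tc L₁ + tc L₂ - 1 := by
  obtain ⟨c, hc₁, hc₂⟩ := hc
  obtain ⟨σ, _, A, rfl, hA, hAc⟩ := IDFA.exists_isCompleteOn_trCount_eq_tc h₁ hc₁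
  obtain ⟨τ, _, B, rfl, hB, hBc⟩ := IDFA.exists_isCompleteOn_trCount_eq_tc h₂ hc₂
  rw [← hA, ← hB]
  exact Nat.le_sub_one_of_lt (IDFA.tc_union_lt_of_isCompleteOn hAc hBc)
end
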